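/- Let F be a field of characteristic 2 and let K/F be a field extension with K² ⊆ F (i.e. K/F is purely inseparable of exponent at most 1). Then K/F is excellent for quadratic forms: for every quadratic form q over F there exists an anisotropic quadratic form φ over F such that the anisotropic part of q_K is isometric to φ_K. -/

import Mathlib

/-!  A concrete coefficient-matrix model of (possibly singular) finite-dimensional
quadratic forms over a field, suitable for characteristic 2. -/

/-- Coefficient representation of a (finite-dimensional) quadratic form over a field `F`:
the form of dimension `dim` given by `q(x) = ∑ i j, c i j * x i * x j`. -/
structure QF (F : Type*) [Field F] : Type _ where
  dim : ℕ
  c : Matrix (Fin dim) (Fin dim) F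

namespace QF

variable {F E : Type*} [Field F] [Field E]

/-- Evaluation of the quadratic form at a vector. -/
def eval (q : QF F) (x : Fin q.dim → F) : F :=
  ∑ i, ∑ j, q.c i j * x i * x j

/-- Scalar extension (base change) of a quadratic form along a ring homomorphism. -/
def map (f : F →+* E) (q : QF F) : QF E :=
  ⟨q.dim, fun i j => f (q.c i j)⟩

/-- Orthogonal sum. -/
def orthSum (q q' : QF F) : QF F :=
  ⟨q.dim + q'.dim,
    Matrix.reindex finSumFinEquiv finSumFinEquiv (Matrix.fromBlocks q.c 0 0 q'.c)⟩

/-- Scaling `a • q`. -/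
def smul (a : F) (q : QF F) : QF F := ⟨q.dim, a • q.c⟩

/-- The nonsingular binary quadratic form `[a,b] : (x,y) ↦ ax² + xy + by²`. -/
def bin (a b : F) : QF F := ⟨2, !![a, 1; 0, b]⟩

/-- The diagonal (totally singular) quadratic form `⟨a₁, …, aₙ⟩`. -/
def diag {n : ℕ} (v : Fin n → F) : QF F := ⟨n, Matrix.diagonal v⟩

/-- The zero-dimensional quadratic form. -/
def nil : QF F := { dim := 0, c := 0 }

/-- The one-dimensional form `⟨1⟩`. -/
def unit : QF F := diag (fun _ : Fin 1 => (1 : F))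

/-- Orthogonal sum of a list of forms. -/
def sumList (l : List (QF F)) : QF F := l.foldr orthSum nil

/-- `pfTensor [a₁,…,aₙ] q` is the tensor product `⟨⟨a₁,…,aₙ⟩⟩_b ⊗ q` of the bilinear
Pfister form `⟨⟨a₁,…,aₙ⟩⟩_b = ⟨1,a₁⟩_b ⊗ ⋯ ⊗ ⟨1,aₙ⟩_b` with the quadratic form `q`,
via `⟨1,a⟩_b ⊗ q ≅ q ⊥ a·q`. -/
def pfTensor (l : List F) (q : QF F) : QF F :=
  l.foldr (fun a r => orthSum r (smul a r)) q

/-- The hyperbolic plane `ℍ ≅ [0,0]`. -/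
def hypPlane : QF F := bin 0 0

/-- The orthogonal sum of `k` hyperbolic planes. -/
def hyp (k : ℕ) : QF F := sumList (List.replicate k hypPlane)

/-- The `l`-dimensional zero form `⟨0,…,0⟩`. -/
def zeros (l : ℕ) : QF F := diag (fun _ : Fin l => (0 : F))

/-- Isometry of quadratic forms. -/
def Isometric (q q' : QF F) : Prop :=
  ∃ e : (Fin q.dim → F) ≃ₗ[F] (Fin q'.dim → F), ∀ x, q'.eval (e x) = q.eval x

/-- Anisotropy: the form has no nontrivial zero. -/
def Anisotropic (q : QF F) : Prop := ∀ x, q.eval x = 0 → x = 0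

/-- A quadratic form is nonsingular if the radical of its polar form
`B_q(x,y) = q(x+y) - q(x) - q(y)` (with matrix `c + cᵀ`) is trivial. -/
def Nonsingular (q : QF F) : Prop := ∀ x, (q.c + q.c.transpose).mulVec x = 0 → x = 0

/-- A quadratic form is totally singular if its polar form vanishes identically. -/
def TotallySingular (q : QF F) : Prop := q.c + q.c.transpose = 0

/-- A quadratic form is hyperbolic if it is isometric to an orthogonal sum of
hyperbolic planes. -/
def Hyperbolic (q : QF F) : Prop := ∃ k, Isometric q (hyp k)

/-- Witt equivalence: `q ~ q'` iff the anisotropic parts agree, equivalently the two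
forms become isometric after adding suitable numbers of hyperbolic planes and zero
forms. -/
def WittEquiv (q q' : QF F) : Prop :=
  ∃ k k' l l', Isometric (orthSum q (orthSum (hyp k) (zeros l)))
    (orthSum q' (orthSum (hyp k') (zeros l')))

/-- `AnisoPartOf φ q` : `φ` is (isometric to) the anisotropic part of `q`, i.e. `φ` is
anisotropic and `q ≅ k × ℍ ⊥ φ ⊥ ⟨0,…,0⟩`. -/
def AnisoPartOf (φ q : QF F) : Prop :=
  Anisotropic φ ∧ ∃ k l, Isometric q (orthSum (hyp k) (orthSum φ (zeros l)))

/-- `Dominates q' q` means `q ≺ q'`, i.e. `q'` dominates `q`: there is an injective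
linear map `t` of the underlying spaces with `q' ∘ t = q`. -/
def Dominates (q' q : QF F) : Prop :=
  ∃ t : (Fin q.dim → F) →ₗ[F] (Fin q'.dim → F), Function.Injective t ∧
    ∀ x, q'.eval (t x) = q.eval x

/-- The affine quadric polynomial `∑ cᵢⱼ XᵢXⱼ` of a quadratic form. -/
noncomputable def toPoly (q : QF F) : MvPolynomial (Fin q.dim) F :=
  ∑ i, ∑ j, MvPolynomial.C (q.c i j) * (MvPolynomial.X i * MvPolynomial.X j)

/-- The affine coordinate ring of the (reduced) quadric `q = 0`. -/
abbrev CoordRing (q : QF F) : Type _ :=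
  MvPolynomial (Fin q.dim) F ⧸ (Ideal.span {q.toPoly}).radical

/-- The function field of the quadric `q = 0` (assuming the quadric is integral). -/
abbrev FunctionField (q : QF F) [IsDomain (CoordRing q)] : Type _ :=
  FractionRing (CoordRing q)

/-- The canonical ring homomorphism from a base field `F` into the function field of a
quadric defined over an extension field `K` of `F`. -/
noncomputable def toFunctionField {K : Type*} [Field K] [Algebra F K] (q : QF K)
    [IsDomain (CoordRing q)] : F →+* FunctionField q :=
  (algebraMap (CoordRing q) (FunctionField q)).comp
    ((algebraMap K (CoordRing q)).comp (algebraMap F K))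

end QF

/-!
Call a quadratic space over `K` *rational* if it is spanned by an additive subgroup on which the
form takes values in `F`; such a subgroup contains a basis, in which the form has coefficients in
`F`. The space of `q_K` is rational, and this property survives each step of the Witt
decomposition. Let `w` be isotropic and outside the radical of the polar form `b`, and choose a
rational `v` with `b(w, v) ≠ 0`. Then `g = b(w, v)⁻¹ v` satisfies `b(w, g) = 1`, and
`Q(g) = b(w, v)⁻² Q(v)` lies in `F` because `K² ⊆ F`, although `g` itself need not be rational.
The complement of `v` is rational, and since `b(g, g) = 2 Q(g) = 0` the map `x ↦ x - b(w, x) g`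
projects it onto `{w, g}^⊥`, changing `Q(x)` by `b(w, x)² Q(g) ∈ F`. So `{w, g}^⊥` is rational and
the hyperbolic plane spanned by `w` and `g` can be split off. Once every isotropic vector lies in
the radical of `Q`, a complement of that radical is anisotropic, and it is rational because
projecting along the radical does not change `Q`.
-/

open QuadraticMap (polar polarBilin)

section Splitting

variable {R W : Type*} [CommRing R] [AddCommGroup W] [Module R W] {Q : QuadraticForm R W}

/-- The hyperbolic plane `(x, y) ↦ x * y` on `R × R`. -/
abbrev hyperbolicPlane (R : Type*) [CommRing R] : QuadraticForm R (R × R) :=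
  QuadraticMap.linMulLin (LinearMap.fst R R R) (LinearMap.snd R R R)

theorem prod_assoc_equivalent {W₁ W₂ W₃ : Type*} [AddCommGroup W₁] [AddCommGroup W₂]
    [AddCommGroup W₃] [Module R W₁] [Module R W₂] [Module R W₃] (Q₁ : QuadraticForm R W₁)
    (Q₂ : QuadraticForm R W₂) (Q₃ : QuadraticForm R W₃) :
    ((Q₁.prod Q₂).prod Q₃).Equivalent (Q₁.prod (Q₂.prod Q₃)) :=
  ⟨⟨LinearEquiv.prodAssoc R W₁ W₂ W₃, fun _ => (add_assoc _ _ _).symm⟩⟩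

theorem quadraticForm_add_of_mem_radical (x : W) {r : W} (hr : r ∈ Q.radical) :
    Q (x + r) = Q x := by
  rw [add_comm]
  exact (QuadraticMap.mem_radical_iff'.1 hr).2 x

theorem quadraticForm_sub_smul (Q : QuadraticForm R W) (x y : W) (c : R) :
    Q (x - c • y) = Q x - c * polar Q x y + c ^ 2 * Q y := by
  rw [sub_eq_add_neg, ← neg_smul, QuadraticMap.map_add Q, QuadraticMap.polar_smul_right,
    QuadraticMap.map_smul, smul_eq_mul, smul_eq_mul]
  ring

theorem equivalent_restrict_prod_zero_of_isCompl_radical {U : Submodule R W}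
    (hU : IsCompl U Q.radical) :
    Q.Equivalent ((Q.restrict U).prod (0 : QuadraticForm R Q.radical)) := by
  refine QuadraticMap.Equivalent.symm ⟨⟨Submodule.prodEquivOfIsCompl _ _ hU, fun x => ?_⟩⟩
  simpa using quadraticForm_add_of_mem_radical (x.1 : W) x.2.2

/-- The orthogonal complement of `{e, g}` with respect to the polar form of `Q`. -/
abbrev pairOrthogonal (Q : QuadraticForm R W) (e g : W) : Submodule R W :=
  (polarBilin Q e).ker ⊓ (polarBilin Q g).ker

theorem mem_pairOrthogonal {e g x : W} :
    x ∈ pairOrthogonal Q e g ↔ polar Q e x = 0 ∧ polar Q g x = 0 := Iff.rfl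

theorem pairOrthogonal_ne_top [Nontrivial R] {e g : W} (heg : polar Q e g = 1) :
    pairOrthogonal Q e g ≠ ⊤ :=
  fun h => one_ne_zero (heg.symm.trans (mem_pairOrthogonal.1 (h ▸ Submodule.mem_top : g ∈ _)).1)

theorem pairOrthogonal_sub_smul (e g : W) (c : R) :
    pairOrthogonal Q e (g - c • e) = pairOrthogonal Q e g := by
  ext x
  simp +contextual

/-- The linear equivalence splitting off the plane spanned by a hyperbolic pair `e`, `g`. -/
def hyperbolicPairEquiv {e g : W} (he : Q e = 0) (hg : Q g = 0) (heg : polar Q e g = 1) :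
    ((R × R) × pairOrthogonal Q e g) ≃ₗ[R] W where
  toFun p := p.1.1 • e + p.1.2 • g + p.2
  invFun v :=
    ((polar Q g v, polar Q e v),
      ⟨v - polar Q g v • e - polar Q e v • g, by
        simp [QuadraticMap.polar_sub_right, he, hg, heg, QuadraticMap.polar_comm Q g e]⟩)
  map_add' p q := by
    simp only [Prod.fst_add, Prod.snd_add, Submodule.coe_add]
    module
  map_smul' a p := by
    simp only [Prod.smul_fst, Prod.smul_snd, Submodule.coe_smul, smul_eq_mul, RingHom.id_apply]
    module
  left_inv := by
    rintro ⟨⟨x, y⟩, u, hu⟩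
    obtain ⟨heu, hgu⟩ := mem_pairOrthogonal.1 hu
    have hx : polar Q g (x • e + y • g + u) = x := by
      simp [QuadraticMap.polar_add_right, hg, heg, hgu, QuadraticMap.polar_comm Q g e]
    have hy : polar Q e (x • e + y • g + u) = y := by
      simp [QuadraticMap.polar_add_right, he, heg, heu]
    refine Prod.ext (Prod.ext hx hy) (Subtype.ext ?_)
    dsimp only
    rw [hx, hy]
    abel
  right_inv v := by simp

theorem equivalent_hyperbolicPlane_prod_of_apply_eq_zero {e g : W} (he : Q e = 0) (hg : Q g = 0)
    (heg : polar Q e g = 1) :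
    Q.Equivalent ((hyperbolicPlane R).prod (Q.restrict (pairOrthogonal Q e g))) := by
  refine QuadraticMap.Equivalent.symm ⟨⟨hyperbolicPairEquiv he hg heg, ?_⟩⟩
  rintro ⟨⟨x, y⟩, u, hu⟩
  obtain ⟨heu, hgu⟩ := mem_pairOrthogonal.1 hu
  change Q (x • e + y • g + u) = x * y + Q u
  simp [QuadraticMap.map_add Q, QuadraticMap.map_smul, QuadraticMap.polar_add_left, he, hg, heg,
    heu, hgu, mul_comm]

theorem equivalent_hyperbolicPlane_prod {e g : W} (he : Q e = 0) (heg : polar Q e g = 1) :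
    Q.Equivalent ((hyperbolicPlane R).prod (Q.restrict (pairOrthogonal Q e g))) := by
  have hg : Q (g - Q g • e) = 0 := by
    rw [quadraticForm_sub_smul, QuadraticMap.polar_comm, heg, he]
    ring
  have heg' : polar Q e (g - Q g • e) = 1 := by simp [QuadraticMap.polar_sub_right, heg, he]
  rw [← pairOrthogonal_sub_smul e g (Q g)]
  exact equivalent_hyperbolicPlane_prod_of_apply_eq_zero he hg heg'

end Splitting

/-- A structure over the subfield `k` on the quadratic space `(W, Q)`: an additive subgroup `V`
spanning `W` over `K` on which `Q` takes values in `k`. An additive subgroup rather than a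
`k`-subspace is enough for polar values to lie in `k`, hence for a basis inside `V` to give `Q`
coefficients in `k`. -/
structure IsRationalStructure {K W : Type*} [Field K] [AddCommGroup W] [Module K W]
    (k : Subfield K) (Q : QuadraticForm K W) (V : AddSubgroup W) : Prop where
  span_eq_top : Submodule.span K (V : Set W) = ⊤
  apply_mem : ∀ v ∈ V, Q v ∈ k

namespace IsRationalStructure

variable {K W : Type*} [Field K] [AddCommGroup W] [Module K W] {k : Subfield K}
  {Q : QuadraticForm K W} {V : AddSubgroup W}

theorem polar_mem (h : IsRationalStructure k Q V) {v w : W} (hv : v ∈ V) (hw : w ∈ V) :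
    polar Q v w ∈ k :=
  sub_mem (sub_mem (h.apply_mem _ (add_mem hv hw)) (h.apply_mem v hv)) (h.apply_mem w hw)

theorem exists_polar_ne_zero (h : IsRationalStructure k Q V) {w : W} (hw : polarBilin Q w ≠ 0) :
    ∃ v ∈ V, polar Q w v ≠ 0 := by
  contrapose! hw
  exact LinearMap.ext_on h.span_eq_top hw

theorem map (h : IsRationalStructure k Q V) {U : Type*} [AddCommGroup U] [Module K U]
    {Q' : QuadraticForm K U} (π : W →ₗ[K] U) (hπ : Function.Surjective π)
    (hQ' : ∀ v ∈ V, Q' (π v) ∈ k) : IsRationalStructure k Q' (V.map π.toAddMonoidHom) where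
  span_eq_top := by
    rw [AddSubgroup.coe_map]
    change Submodule.span K (π '' V) = ⊤
    rw [Submodule.span_image, h.span_eq_top, Submodule.map_top, LinearMap.range_eq_top.2 hπ]
  apply_mem := by
    rintro _ ⟨v, hv, rfl⟩
    exact hQ' v hv

theorem restrict_of_isCompl_radical (h : IsRationalStructure k Q V) {U : Submodule K W}
    (hU : IsCompl U Q.radical) :
    IsRationalStructure k (Q.restrict U) (V.map (U.projectionOnto _ hU).toAddMonoidHom) := by
  refine h.map _ (Submodule.projectionOnto_surjective hU) fun v hv => ?_
  have hproj : Q (U.projectionOnto _ hU v) = Q v := by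
    rw [← quadraticForm_add_of_mem_radical _ (Q.radical.projectionOnto _ hU.symm v).2]
    exact congrArg Q (Submodule.projection_add_projection_eq_self hU v)
  exact hproj ▸ h.apply_mem v hv

theorem exists_restrict_orthogonal (h : IsRationalStructure k Q V) {g : W} (hg : g ∈ V)
    (hg₀ : polarBilin Q g ≠ 0) :
    ∃ V', IsRationalStructure k (Q.restrict (polarBilin Q g).ker) V' := by
  obtain ⟨e, he, hge⟩ := h.exists_polar_ne_zero hg₀
  let π : W →ₗ[K] (polarBilin Q g).ker :=
    (LinearMap.id - ((polar Q g e)⁻¹ • polarBilin Q g).smulRight e).codRestrict _ fun x => by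
      simp [hge, mul_right_comm]
  refine ⟨_, h.map π (fun x => ⟨x, ?_⟩) fun v hv => ?_⟩
  · ext
    simp [π]
  · have hc : (polar Q g e)⁻¹ * polar Q g v ∈ k :=
      mul_mem (inv_mem (h.polar_mem hg he)) (h.polar_mem hg hv)
    change Q (v - ((polar Q g e)⁻¹ * polar Q g v) • e) ∈ k
    rw [quadraticForm_sub_smul]
    exact add_mem (sub_mem (h.apply_mem v hv) (mul_mem hc (h.polar_mem hv he)))
      (mul_mem (pow_mem hc 2) (h.apply_mem e he))

theorem exists_restrict_pairOrthogonal [CharP K 2] (hk : ∀ x : K, x ^ 2 ∈ k)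
    (h : IsRationalStructure k Q V) {w : W} (hw : polarBilin Q w ≠ 0) :
    ∃ g V', polar Q w g = 1 ∧ IsRationalStructure k (Q.restrict (pairOrthogonal Q w g)) V' := by
  obtain ⟨v, hv, hwv⟩ := h.exists_polar_ne_zero hw
  have hv₀ : polarBilin Q v ≠ 0 := fun h₀ =>
    hwv ((QuadraticMap.polar_comm Q w v).trans (LinearMap.congr_fun h₀ w))
  obtain ⟨V', h'⟩ := h.exists_restrict_orthogonal hv hv₀
  set g := (polar Q w v)⁻¹ • v with hg
  have hwg : polar Q w g = 1 := by simp [hg, hwv]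
  have hgg : polar Q g g = 0 := by simp [QuadraticMap.polar_self, CharTwo.two_eq_zero]
  have hgker {x : W} (hx : polar Q v x = 0) : polar Q g x = 0 := by simp [hg, hx]
  have hQg : Q g ∈ k := by
    rw [hg, QuadraticMap.map_smul, ← sq]
    exact mul_mem (hk _) (h.apply_mem v hv)
  let π : (polarBilin Q v).ker →ₗ[K] pairOrthogonal Q w g :=
    ((LinearMap.id - (polarBilin Q w).smulRight g) ∘ₗ Submodule.subtype _).codRestrict _
      fun x => by simp [QuadraticMap.polar_sub_right, hwg, hgg, hgker x.2]
  refine ⟨g, _, hwg, h'.map π (fun x => ?_) fun x hx => ?_⟩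
  · obtain ⟨hwx, hgx⟩ := mem_pairOrthogonal.1 x.2
    have hvx : polar Q v x = 0 := by simpa [hg, hwv] using hgx
    exact ⟨⟨x, hvx⟩, Subtype.ext (by simp [π, hwx])⟩
  · change Q (x - polar Q w x • g) ∈ k
    rw [quadraticForm_sub_smul, QuadraticMap.polar_comm Q x g, hgker x.2, mul_zero, sub_zero]
    exact add_mem (h'.apply_mem x hx) (mul_mem (hk _) hQg)

theorem exists_basis [FiniteDimensional K W] (h : IsRationalStructure k Q V) :
    ∃ b : Module.Basis (Fin (Module.finrank K W)) K W, ∀ i, b i ∈ V := by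
  let b := Module.Basis.ofSpan h.span_eq_top.ge
  have : Fintype _ := FiniteDimensional.fintypeBasisIndex b
  refine ⟨b.reindex (Fintype.equivFinOfCardEq (Module.finrank_eq_card_basis b).symm), fun i => ?_⟩
  rw [Module.Basis.reindex_apply]
  exact Module.Basis.ofSpan_subset h.span_eq_top.ge ⟨_, rfl⟩

end IsRationalStructure

namespace QF

variable {F : Type*} [Field F]

/-- The quadratic form on coordinate vectors defined by the coefficient matrix of `q`. -/
noncomputable def toQuadraticForm (q : QF F) : QuadraticForm F (Fin q.dim → F) :=
  q.c.toQuadraticForm'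

theorem toQuadraticForm_apply (q : QF F) (x : Fin q.dim → F) : q.toQuadraticForm x = q.eval x := by
  simp only [toQuadraticForm, Matrix.toQuadraticForm', LinearMap.BilinMap.toQuadraticMap_apply,
    Matrix.toLinearMap₂'_apply, smul_eq_mul, eval]
  exact Finset.sum_congr rfl fun i _ => Finset.sum_congr rfl fun j _ => by ring

theorem isometric_iff_equivalent {q q' : QF F} :
    Isometric q q' ↔ q.toQuadraticForm.Equivalent q'.toQuadraticForm := by
  constructor
  · rintro ⟨e, he⟩
    exact ⟨⟨e, fun x => (toQuadraticForm_apply q' _).trans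
      ((he x).trans (toQuadraticForm_apply q x).symm)⟩⟩
  · rintro ⟨e⟩
    exact ⟨e.toLinearEquiv, fun x => (toQuadraticForm_apply q' _).symm.trans
      ((e.map_app x).trans (toQuadraticForm_apply q x))⟩

theorem toQuadraticForm_orthSum_equivalent (q q' : QF F) :
    (orthSum q q').toQuadraticForm.Equivalent (q.toQuadraticForm.prod q'.toQuadraticForm) := by
  refine ⟨⟨(LinearEquiv.funCongrLeft F F finSumFinEquiv).trans
    (LinearEquiv.sumArrowLequivProdArrow _ _ F F), fun x => ?_⟩⟩
  change q.toQuadraticForm _ + q'.toQuadraticForm _ = (orthSum q q').toQuadraticForm x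
  simp only [toQuadraticForm_apply, eval]
  change _ = ∑ i : Fin (q.dim + q'.dim), ∑ j : Fin (q.dim + q'.dim), _
  simp_rw [← finSumFinEquiv.sum_comp (M := F)]
  simp only [orthSum, Matrix.reindex_apply, Matrix.submatrix_apply, Equiv.symm_apply_apply,
    Fintype.sum_sum_type, Matrix.fromBlocks_apply₁₁, Matrix.fromBlocks_apply₁₂,
    Matrix.fromBlocks_apply₂₁, Matrix.fromBlocks_apply₂₂, Matrix.zero_apply, zero_mul,
    Finset.sum_const_zero, add_zero, zero_add]
  rfl

theorem toQuadraticForm_hypPlane_equivalent :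
    (hypPlane : QF F).toQuadraticForm.Equivalent (hyperbolicPlane F) := by
  refine ⟨⟨LinearEquiv.finTwoArrow F F, fun x => ?_⟩⟩
  rw [toQuadraticForm_apply]
  change Fin 2 → F at x
  change x 0 * x 1 = ∑ i : Fin 2, ∑ j : Fin 2, !![0, 1; 0, 0] i j * x i * x j
  simp

theorem toQuadraticForm_zeros (l : ℕ) : (zeros l : QF F).toQuadraticForm = 0 := by
  ext x
  rw [toQuadraticForm_apply]
  change _ = (0 : F)
  simp [eval, zeros, diag]

section BaseChange

variable {K : Type*} [Field K] (f : F →+* K)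

theorem eval_map (q : QF F) (x : Fin q.dim → F) : (q.map f).eval (f ∘ x) = f (q.eval x) := by
  simp only [eval, map_sum, map_mul]
  rfl

theorem Anisotropic.of_map {f : F →+* K} {q : QF F} (h : (q.map f).Anisotropic) :
    q.Anisotropic := fun x hx => by
  have hfx : f ∘ x = 0 := h _ ((eval_map f q x).trans (by rw [hx, map_zero]))
  exact funext fun i => (map_eq_zero f).1 (congrFun hfx i)

theorem isRationalStructure_map (q : QF F) :
    IsRationalStructure f.fieldRange (q.map f).toQuadraticForm
      (f.toAddMonoidHom.compLeft (Fin (q.map f).dim)).range where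
  span_eq_top := by
    refine top_le_iff.1 ((Pi.basisFun K _).span_eq.ge.trans (Submodule.span_mono ?_))
    rintro _ ⟨i, rfl⟩
    exact ⟨Pi.single i 1, by ext j; simp [Pi.single_apply, apply_ite f]⟩
  apply_mem := by
    rintro _ ⟨x, rfl⟩
    exact ⟨q.eval x, ((toQuadraticForm_apply _ _).trans (eval_map f q x)).symm⟩

end BaseChange

section AnisotropicPart

variable {K W : Type*} [Field K] [AddCommGroup W] [Module K W] {Q : QuadraticForm K W}

/-- `φ` is the anisotropic part of `Q`: the analogue of `AnisoPartOf` for a quadratic form on an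
arbitrary vector space. -/
def HasAnisotropicPart (Q : QuadraticForm K W) (φ : QF K) : Prop :=
  φ.Anisotropic ∧ ∃ m l, Q.Equivalent (orthSum (hyp m) (orthSum φ (zeros l))).toQuadraticForm

theorem anisoPartOf_iff {φ q : QF K} :
    AnisoPartOf φ q ↔ HasAnisotropicPart q.toQuadraticForm φ := by
  simp only [AnisoPartOf, HasAnisotropicPart, isometric_iff_equivalent]

theorem toQuadraticForm_hyp_succ_equivalent (m : ℕ) :
    (hyp (m + 1) : QF K).toQuadraticForm.Equivalent
      ((hyperbolicPlane K).prod (hyp m : QF K).toQuadraticForm) :=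
  (toQuadraticForm_orthSum_equivalent hypPlane (hyp m)).trans
    (toQuadraticForm_hypPlane_equivalent.prod (.refl _))

theorem toQuadraticForm_hyp_zero_orthSum_equivalent (q : QF K) :
    (orthSum (hyp 0) q).toQuadraticForm.Equivalent q.toQuadraticForm := by
  refine (toQuadraticForm_orthSum_equivalent _ _).trans ?_
  have : Unique (Fin (hyp 0 : QF K).dim → K) := inferInstanceAs (Unique (Fin 0 → K))
  refine ⟨⟨LinearEquiv.uniqueProd, fun x => ?_⟩⟩
  simp [Subsingleton.elim x.1 0]

theorem HasAnisotropicPart.of_equivalent_prod_zero {R : Type*} [AddCommGroup R] [Module K R]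
    [FiniteDimensional K R] {φ : QF K} (hφ : φ.Anisotropic)
    (h : Q.Equivalent (φ.toQuadraticForm.prod (0 : QuadraticForm K R))) :
    HasAnisotropicPart Q φ := by
  have hzero : (0 : QuadraticForm K R).Equivalent
      (zeros (Module.finrank K R) : QF K).toQuadraticForm := by
    rw [toQuadraticForm_zeros]
    exact ⟨⟨(Module.finBasis K R).equivFun, fun _ => rfl⟩⟩
  exact ⟨hφ, 0, _, h.trans <| ((QuadraticMap.Equivalent.refl _).prod hzero).trans <|
    (toQuadraticForm_orthSum_equivalent _ _).symm.trans
      (toQuadraticForm_hyp_zero_orthSum_equivalent _).symm⟩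

theorem HasAnisotropicPart.of_equivalent_hyperbolicPlane_prod {U : Type*} [AddCommGroup U]
    [Module K U] {Q' : QuadraticForm K U} {φ : QF K}
    (h : Q.Equivalent ((hyperbolicPlane K).prod Q')) (h' : HasAnisotropicPart Q' φ) :
    HasAnisotropicPart Q φ := by
  obtain ⟨hφ, m, l, hml⟩ := h'
  refine ⟨hφ, m + 1, l, ?_⟩
  have hQ' := hml.trans (toQuadraticForm_orthSum_equivalent _ _)
  have hm := (toQuadraticForm_hyp_succ_equivalent (K := K) m).symm
  exact h.trans <| ((QuadraticMap.Equivalent.refl _).prod hQ').trans <|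
    (prod_assoc_equivalent _ _ _).symm.trans <| (hm.prod (.refl _)).trans
      (toQuadraticForm_orthSum_equivalent _ _).symm

end AnisotropicPart

end QF

namespace IsRationalStructure

open QF

variable {F K W : Type*} [Field F] [Field K] [AddCommGroup W] [Module K W] [FiniteDimensional K W]
  {f : F →+* K} {Q : QuadraticForm K W} {V : AddSubgroup W}

theorem exists_equivalent_map (h : IsRationalStructure f.fieldRange Q V) :
    ∃ φ : QF F, Q.Equivalent (φ.map f).toQuadraticForm := by
  obtain ⟨b, hb⟩ := h.exists_basis
  have hmem (i j) : ∃ a, f a = Q.toBilin b (b i) (b j) := by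
    rw [← RingHom.mem_fieldRange, QuadraticMap.toBilin_apply]
    split_ifs
    exacts [h.apply_mem _ (hb i), h.polar_mem (hb i) (hb j), zero_mem _]
  choose c hc using hmem
  refine ⟨⟨_, Matrix.of c⟩, ⟨⟨b.equivFun, fun x => ?_⟩⟩⟩
  have hQx : Q x = ∑ i, ∑ j, b.repr x i • b.repr x j • Q.toBilin b (b i) (b j) := by
    conv_lhs => rw [← QuadraticMap.toQuadraticMap_toBilin Q b]
    rw [LinearMap.BilinMap.toQuadraticMap_apply, ← LinearMap.sum_repr_mul_repr_mul b b,
      Finsupp.sum_fintype _ _ (by simp)]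
    exact Finset.sum_congr rfl fun i _ => Finsupp.sum_fintype _ _ (by simp)
  refine (toQuadraticForm_apply _ _).trans ?_
  change ∑ i, ∑ j, f (c i j) * b.repr x i * b.repr x j = Q x
  rw [hQx]
  refine Finset.sum_congr rfl fun i _ => Finset.sum_congr rfl fun j _ => ?_
  rw [hc, smul_eq_mul, smul_eq_mul]
  ring

theorem exists_hasAnisotropicPart_map_of_isotropic_mem_radical
    (h : IsRationalStructure f.fieldRange Q V) (hQ : ∀ w, Q w = 0 → w ∈ Q.radical) :
    ∃ φ : QF F, HasAnisotropicPart Q (φ.map f) := by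
  obtain ⟨U, hU⟩ := Submodule.exists_isCompl Q.radical
  obtain ⟨φ, hφ⟩ := (h.restrict_of_isCompl_radical hU.symm).exists_equivalent_map
  have hU₀ : (Q.restrict U).Anisotropic := fun u hu =>
    Subtype.ext (Submodule.disjoint_def.1 hU.disjoint _ (hQ _ hu) u.2)
  obtain ⟨e⟩ := hφ.symm
  have hφ₀ : (φ.map f).Anisotropic := fun x hx => e.toLinearEquiv.map_eq_zero_iff.1
    (hU₀ _ ((e.map_app x).trans ((toQuadraticForm_apply _ _).trans hx)))
  exact ⟨φ, .of_equivalent_prod_zero hφ₀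
    ((equivalent_restrict_prod_zero_of_isCompl_radical hU.symm).trans (hφ.prod (.refl _)))⟩

theorem exists_hasAnisotropicPart_map [CharP K 2] (h : IsRationalStructure f.fieldRange Q V)
    (hf : ∀ x : K, x ^ 2 ∈ f.fieldRange) : ∃ φ : QF F, HasAnisotropicPart Q (φ.map f) := by
  induction hn : Module.finrank K W using Nat.strong_induction_on generalizing W with
  | _ n ih
  by_cases hQ : ∀ w, Q w = 0 → w ∈ Q.radical
  · exact h.exists_hasAnisotropicPart_map_of_isotropic_mem_radical hQ
  push Not at hQ
  obtain ⟨w, hw, hwrad⟩ := hQ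
  have hw₀ : polarBilin Q w ≠ 0 := fun h₀ => hwrad ⟨hw, h₀⟩
  obtain ⟨g, V', hwg, h'⟩ := h.exists_restrict_pairOrthogonal hf hw₀
  obtain ⟨φ, hφ⟩ := ih _ (hn ▸ Submodule.finrank_lt (pairOrthogonal_ne_top hwg)) h' rfl
  exact ⟨φ, hφ.of_equivalent_hyperbolicPlane_prod (equivalent_hyperbolicPlane_prod hw hwg)⟩

end IsRationalStructure

open QF in
/-- Let `F` be a field of characteristic 2 and `K/F` a field extension
with `K² ⊆ F`.  Then `K/F` is excellent for quadratic forms: for every quadratic form `q`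
over `F` there is an anisotropic quadratic form `φ` over `F` whose extension `φ_K` is
(isometric to) the anisotropic part of `q_K`. -/
theorem excellence_of_exponent_one_extension
    (F K : Type*) [Field F] [Field K] [Algebra F K] [CharP F 2]
    (hK : ∀ x : K, ∃ y : F, algebraMap F K y = x ^ 2)
    (q : QF F) :
    ∃ φ : QF F, φ.Anisotropic ∧
      AnisoPartOf (φ.map (algebraMap F K)) (q.map (algebraMap F K)) := by
  have : CharP K 2 := charP_of_injective_algebraMap (algebraMap F K).injective 2
  have hsq (x : K) : x ^ 2 ∈ (algebraMap F K).fieldRange := hK x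
  obtain ⟨φ, hφ⟩ := (isRationalStructure_map (algebraMap F K) q).exists_hasAnisotropicPart_map hsq
  exact ⟨φ, hφ.1.of_map, anisoPartOf_iff.2 hφ⟩
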